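/- Let S := ℂ[t₂,t₃], let R be the localization at y of S[x,y]/(y² − 4x³ + t₂x + t₃), and let d : R → Ω denote the universal derivation into the module of Kähler differentials Ω := Ω_{R/S}. Then the following identities hold in Ω: (1) (x²/y)·dx = d(y/6) + (t₂/(12y))·dx; (2) (x³/y)·dx = d(xy/10) + (3t₂/20)·(x/y)·dx + (t₃/10)·(1/y)·dx; (3) (x⁴/y)·dx = d(x²y/14 + 5t₂y/168) + (t₃/7)·(x/y)·dx + (5t₂²/336)·(1/y)·dx; (4) (x⁵/y)·dx = d(x³y/18 + 7t₂xy/360 + t₃y/36) + (7t₂²/240)·(x/y)·dx + (t₂t₃/30)·(1/y)·dx. -/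

import Mathlib

/-! Since `y² = 4x³ - t₂x - t₃` and `y` is invertible, `dy = (6x² - t₂/2) y⁻¹ dx` in `Ω`
(`D_y`). Expanding the exact forms by the Leibniz rule therefore turns each identity into an
equality of two multiples of `dx`, whose coefficients agree modulo the Weierstrass equation and
`y y⁻¹ = 1`. Nonzero integers are invertible in `R` because `ℂ ⊆ S`; every reciprocal that occurs is an
integer multiple of `u = 1/5040`, the common denominator, and `du = 0`. -/

open MvPolynomial

noncomputable section

/-- The base ring `S := ℂ[t₂,t₃]`. -/
abbrev Sbase := MvPolynomial (Fin 2) ℂ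

/-- The polynomial ring `S[x,y]`, with `x = X 0`, `y = X 1`. -/
abbrev Q := MvPolynomial (Fin 2) Sbase

/-- The Weierstrass polynomial `y² − 4x³ + t₂x + t₃ ∈ S[x,y]`. -/
def W : Q := (X 1) ^ 2 - 4 * (X 0) ^ 3 + C (X 0) * (X 0) + C (X 1)

/-- The affine curve ring `S[x,y]/(y² − 4x³ + t₂x + t₃)`. -/
def Rq : Type := Q ⧸ Ideal.span {W}

instance : CommRing Rq := Ideal.Quotient.commRing _
instance : Algebra Sbase Rq := Ideal.Quotient.algebra _

/-- The class of `y` in the curve ring. -/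
def yq : Rq := Ideal.Quotient.mk _ (X 1)

/-- `R` is the localization at `y` of `S[x,y]/(y² − 4x³ + t₂x + t₃)`. -/
def Rr : Type := Localization (Submonoid.powers yq)

instance : CommRing Rr := inferInstanceAs (CommRing (Localization (Submonoid.powers yq)))
instance : Algebra Rq Rr := inferInstanceAs (Algebra Rq (Localization (Submonoid.powers yq)))
instance : Algebra Sbase Rr := ((algebraMap Rq Rr).comp (algebraMap Sbase Rq)).toAlgebra

/-- The universal derivation `d : R → Ω_{R/S}`. -/
def D : Derivation Sbase Rr (Ω[Rr⁄Sbase]) := KaehlerDifferential.D Sbase Rr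

def x : Rr := algebraMap Rq Rr (Ideal.Quotient.mk _ (X 0))
def y : Rr := algebraMap Rq Rr yq
def t2 : Rr := algebraMap Sbase Rr (X 0)
def t3 : Rr := algebraMap Sbase Rr (X 1)

lemma ringInverse_eq_of_mul_eq_one {A : Type*} [CommRing A] {a b : A} (h : a * b = 1) :
    Ring.inverse a = b := by
  have ha : IsUnit a := IsUnit.of_mul_eq_one b h
  calc Ring.inverse a = Ring.inverse a * (a * b) := by rw [h, mul_one]
    _ = b := by rw [← mul_assoc, Ring.inverse_mul_cancel a ha, one_mul]

lemma weierstrass : y ^ 2 = 4 * x ^ 3 - t2 * x - t3 := by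
  have hq : (Ideal.Quotient.mk (Ideal.span {W}) W) = 0 :=
    Ideal.Quotient.eq_zero_iff_mem.mpr (Ideal.mem_span_singleton_self W)
  have hr := congrArg (algebraMap Rq Rr)
    (show (Ideal.Quotient.mk (Ideal.span {W}) W : Rq) = 0 from hq)
  have h : y ^ 2 - 4 * x ^ 3 + t2 * x + t3 = 0 := by
    let f : Q →+* Rr := (algebraMap Rq Rr).comp (Ideal.Quotient.mk (Ideal.span {W}))
    have hf : f W = 0 := hr.trans (map_zero _)
    have h0 : f (X 0) = x := rfl
    have h1 : f (X 1) = y := rfl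
    have h2 : f (C (X 0)) = t2 := rfl
    have h3 : f (C (X 1)) = t3 := rfl
    simpa only [W, map_add, map_sub, map_mul, map_pow, map_ofNat, h0, h1, h2, h3] using hf
  linear_combination h

lemma exists_y_inv : ∃ i : Rr, y * i = 1 :=
  (IsLocalization.map_units (M := Submonoid.powers yq)
    (Localization (Submonoid.powers yq)) ⟨yq, Submonoid.mem_powers yq⟩).exists_right_inv

/-- The common denominator of the identities is invertible, and its inverse is a constant. -/
lemma exists_const_inv : ∃ u : Rr, 5040 * u = 1 ∧ D u = 0 := by
  refine ⟨algebraMap Sbase Rr (C (1 / 5040)), ?_, D.map_algebraMap _⟩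
  have h : (5040 : Sbase) * C (1 / 5040) = 1 := by
    rw [← map_ofNat (C : ℂ →+* Sbase) 5040, ← map_mul]
    norm_num
  simpa only [map_mul, map_ofNat, map_one] using congrArg (algebraMap Sbase Rr) h

lemma D_t2 : D t2 = 0 := D.map_algebraMap _

lemma D_t3 : D t3 = 0 := D.map_algebraMap _

lemma D_ofNat (n : ℕ) [n.AtLeastTwo] : D (ofNat(n) : Rr) = 0 := D.map_natCast n

/-- The differential of the Weierstrass equation, solved for `dy`; here `2520 u = 1/2`. -/
lemma D_y {i u : Rr} (hi : y * i = 1) (hu : 5040 * u = 1) :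
    D y = (i * (6 * x ^ 2 - 2520 * u * t2)) • D x := by
  have h := congrArg D weierstrass
  simp only [pow_succ, pow_zero, one_mul, map_sub, Derivation.leibniz, D_t2, D_t3, D_ofNat,
    smul_zero, add_zero, sub_zero] at h
  have h2 : (2 * y) • D y = (12 * x ^ 2 - t2) • D x := by
    calc (2 * y) • D y = y • D y + y • D y := by module
      _ = _ := by rw [h]; module
  calc D y = (2520 * u * i) • ((2 * y) • D y) := by
        rw [smul_smul, show 2520 * u * i * (2 * y) = 1 by
          linear_combination 5040 * u * hi + hu, one_smul]
    _ = _ := by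
        rw [h2, smul_smul]
        congr 1
        linear_combination 6 * x ^ 2 * i * hu

/-- The reduction identities for `xᵏdx/y`, `k = 2,3,4,5`, in the Kähler differentials of
the localized Weierstrass curve ring, modulo exact forms. -/
theorem statement8 :
    ((x ^ 2 * Ring.inverse y) • D x
        = D (Ring.inverse 6 * y) + (t2 * Ring.inverse (12 * y)) • D x) ∧
    ((x ^ 3 * Ring.inverse y) • D x
        = D (Ring.inverse 10 * (x * y)) + (3 * t2 * Ring.inverse 20 * (x * Ring.inverse y)) • D x
          + (t3 * Ring.inverse 10 * Ring.inverse y) • D x) ∧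
    ((x ^ 4 * Ring.inverse y) • D x
        = D (x ^ 2 * y * Ring.inverse 14 + 5 * t2 * y * Ring.inverse 168)
          + (t3 * Ring.inverse 7 * (x * Ring.inverse y)) • D x
          + (5 * t2 ^ 2 * Ring.inverse 336 * Ring.inverse y) • D x) ∧
    ((x ^ 5 * Ring.inverse y) • D x
        = D (x ^ 3 * y * Ring.inverse 18 + 7 * t2 * x * y * Ring.inverse 360
              + t3 * y * Ring.inverse 36)
          + (7 * t2 ^ 2 * Ring.inverse 240 * (x * Ring.inverse y)) • D x
          + (t2 * t3 * Ring.inverse 30 * Ring.inverse y) • D x) := by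
  obtain ⟨i, hi⟩ := exists_y_inv
  obtain ⟨u, hu, hDu⟩ := exists_const_inv
  have hy := D_y hi hu
  have hW := weierstrass
  have h6 : Ring.inverse (6 : Rr) = 840 * u :=
    ringInverse_eq_of_mul_eq_one (by linear_combination hu)
  have h10 : Ring.inverse (10 : Rr) = 504 * u :=
    ringInverse_eq_of_mul_eq_one (by linear_combination hu)
  have h20 : Ring.inverse (20 : Rr) = 252 * u :=
    ringInverse_eq_of_mul_eq_one (by linear_combination hu)
  have h14 : Ring.inverse (14 : Rr) = 360 * u :=
    ringInverse_eq_of_mul_eq_one (by linear_combination hu)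
  have h168 : Ring.inverse (168 : Rr) = 30 * u :=
    ringInverse_eq_of_mul_eq_one (by linear_combination hu)
  have h7 : Ring.inverse (7 : Rr) = 720 * u :=
    ringInverse_eq_of_mul_eq_one (by linear_combination hu)
  have h336 : Ring.inverse (336 : Rr) = 15 * u :=
    ringInverse_eq_of_mul_eq_one (by linear_combination hu)
  have h18 : Ring.inverse (18 : Rr) = 280 * u :=
    ringInverse_eq_of_mul_eq_one (by linear_combination hu)
  have h360 : Ring.inverse (360 : Rr) = 14 * u :=
    ringInverse_eq_of_mul_eq_one (by linear_combination hu)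
  have h36 : Ring.inverse (36 : Rr) = 140 * u :=
    ringInverse_eq_of_mul_eq_one (by linear_combination hu)
  have h240 : Ring.inverse (240 : Rr) = 21 * u :=
    ringInverse_eq_of_mul_eq_one (by linear_combination hu)
  have h30 : Ring.inverse (30 : Rr) = 168 * u :=
    ringInverse_eq_of_mul_eq_one (by linear_combination hu)
  have h12y : Ring.inverse (12 * y) = 420 * u * i :=
    ringInverse_eq_of_mul_eq_one (by linear_combination 5040 * u * hi + hu)
  rw [ringInverse_eq_of_mul_eq_one hi, h6, h10, h20, h14, h168, h7, h336, h18, h360, h36, h240,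
    h30, h12y]
  simp only [pow_succ, pow_zero, one_mul, map_add, Derivation.leibniz, D_t2, D_t3, D_ofNat, hDu,
    hy, smul_zero, add_zero, zero_add]
  -- The combination `y * hi - i * hW` replaces `y` by `i * (4 * x ^ 3 - t2 * x - t3)`, so that
  -- every term becomes a multiple of `i`; `hu` then clears the denominators.
  refine ⟨?_, ?_, ?_, ?_⟩ <;> match_scalars
  · linear_combination (-x ^ 2 * i + 420 * u * t2 * i) * hu
  · linear_combination (-x ^ 3 * i + 252 * u * t2 * x * i) * hu + 504 * u * (y * hi - i * hW)
  · linear_combination (-x ^ 4 * i + 180 * u * t2 * x ^ 2 * i + 75 * u * t2 ^ 2 * i) * hu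
      + 720 * u * x * (y * hi - i * hW)
  · linear_combination (-x ^ 5 * i
        + u * i * (140 * t2 * x ^ 3 + 49 * t2 ^ 2 * x + 70 * t2 * t3)) * hu
      + (840 * u * x ^ 2 + 98 * u * t2) * (y * hi - i * hW)

end
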